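/- arXiv:1003.6021 — 3 statements merged into one kernel-verified Lean document; each statement's English description precedes it below -/
import Mathlib

section
/- Let R > 0, let (x_i)_{i∈ℕ} be points of the closed ball B̄(0,R) ⊆ ℝ², and let (c_i)_{i∈ℕ} be real numbers with ∑_i |c_i| < ∞. Then the series ℱ(x) := ∑_i (c_i/2π) log|x − x_i| converges absolutely for Lebesgue-almost every x ∈ ℝ², the resulting function ℱ is integrable on every bounded measurable subset of ℝ², and its distributional Laplacian is the sum of weighted Dirac masses: for every φ ∈ C_c^∞(ℝ²), ∫_{ℝ²} ℱ(x) Δφ(x) dx = ∑_i c_i φ(x_i). -/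
open MeasureTheory Real

/-- Partial derivative in the `α`-th coordinate direction of a function on `ℝ²`. -/
noncomputable def pd (α : Fin 2) (f : EuclideanSpace ℝ (Fin 2) → ℝ) :
    EuclideanSpace ℝ (Fin 2) → ℝ :=
  fun x => fderiv ℝ f x (EuclideanSpace.single α 1)

/-- The Laplacian `Δf = ∂₁²f + ∂₂²f` on `ℝ²`. -/
noncomputable def lap (f : EuclideanSpace ℝ (Fin 2) → ℝ) :
    EuclideanSpace ℝ (Fin 2) → ℝ :=
  fun x => ∑ α : Fin 2, pd α (pd α f) x

open Filter Topology Set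

lemma aux_tsum {X : Type*} [MeasurableSpace X] {μ : Measure X} (F : ℕ → X → ℝ)
    (hF : ∀ i, Integrable (F i) μ) (hs : Summable fun i => ∫ a, ‖F i a‖ ∂μ) :
    (∀ᵐ a ∂μ, Summable fun i => ‖F i a‖) ∧ Integrable (fun a => ∑' i, F i a) μ := by
  have hfin : ∑' i, ∫⁻ a, ‖F i a‖ₑ ∂μ ≠ ⊤ := by
    have h : ∀ i, ∫⁻ a, ‖F i a‖ₑ ∂μ = ENNReal.ofReal (∫ a, ‖F i a‖ ∂μ) := fun i =>
      (ofReal_integral_norm_eq_lintegral_enorm (hF i)).symm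
    simp_rw [h]
    exact hs.tsum_ofReal_ne_top
  have hae : ∀ᵐ a ∂μ, Summable fun i => ‖F i a‖ := by
    apply summable_norm_of_tsum_eLpNorm_ne_top le_rfl (fun i => (hF i).1)
    simpa only [eLpNorm_one_eq_lintegral_enorm] using hfin
  refine ⟨hae, ?_, ?_⟩
  · refine aestronglyMeasurable_of_tendsto_ae (u := atTop)
      (f := fun (n : ℕ) a => ∑ i ∈ Finset.range n, F i a) ?_ ?_
    · intro n
      exact Finset.aestronglyMeasurable_fun_sum _ (fun i _ => (hF i).1)
    · filter_upwards [hae] with a ha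
      exact ha.of_norm.hasSum.tendsto_sum_nat
  · refine lt_of_le_of_lt ?_ hfin.lt_top
    rw [← lintegral_tsum (fun i => (hF i).1.enorm)]
    apply lintegral_mono_ae
    filter_upwards [hae] with a ha
    exact enorm_tsum_le_tsum_enorm


lemma aux_log_ball (r : ℝ) :
    IntegrableOn (fun p : (EuclideanSpace ℝ (Fin 2)) => Real.log ‖p‖) (Metric.ball 0 r) volume := by
  rw [integrableOn_fun_norm_addHaar volume (f := Real.log)]
  by_cases hr : 0 < r
  · have hc : Continuous (fun y : ℝ => y * Real.log y) := Real.continuous_mul_log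
    have := (hc.integrableOn_Icc (μ := volume) (a := 0) (b := r)).mono_set Ioo_subset_Icc_self
    simpa using this
  · simp [Ioo_eq_empty_of_le (not_lt.mp hr)]

lemma aux_log_shift (R r : ℝ) (a : (EuclideanSpace ℝ (Fin 2))) (ha : ‖a‖ ≤ R) :
    IntegrableOn (fun p : (EuclideanSpace ℝ (Fin 2)) => Real.log ‖p - a‖) (Metric.ball 0 r) volume ∧
    ∫ p in Metric.ball (0 : (EuclideanSpace ℝ (Fin 2))) r, ‖Real.log ‖p - a‖‖ ≤
      ∫ p in Metric.ball (0 : (EuclideanSpace ℝ (Fin 2))) (r + R), ‖Real.log ‖p‖‖ := by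
  have hsub : Metric.ball (0 : (EuclideanSpace ℝ (Fin 2))) r ⊆ Metric.ball a (r + R) := by
    intro p hp
    rw [mem_ball_zero_iff] at hp
    rw [mem_ball_iff_norm]
    have := norm_sub_le p a
    linarith
  have hpre : (fun p : (EuclideanSpace ℝ (Fin 2)) => p - a) ⁻¹' (Metric.ball 0 (r + R)) = Metric.ball a (r + R) := by
    ext p; simp [dist_eq_norm]
  have hmp : MeasurePreserving (fun p : (EuclideanSpace ℝ (Fin 2)) => p - a) volume volume :=
    measurePreserving_sub_right volume a
  have hme : MeasurableEmbedding (fun p : (EuclideanSpace ℝ (Fin 2)) => p - a) := measurableEmbedding_subRight a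
  have h1 : IntegrableOn (fun p : (EuclideanSpace ℝ (Fin 2)) => Real.log ‖p - a‖) (Metric.ball a (r + R)) volume := by
    have := (hmp.integrableOn_comp_preimage hme (f := fun p : (EuclideanSpace ℝ (Fin 2)) => Real.log ‖p‖)
      (s := Metric.ball 0 (r + R))).2 (aux_log_ball _)
    rwa [hpre] at this
  refine ⟨h1.mono_set hsub, ?_⟩
  have h2 := hmp.setIntegral_preimage_emb hme (fun p : (EuclideanSpace ℝ (Fin 2)) => ‖Real.log ‖p‖‖)
    (Metric.ball 0 (r + R))
  rw [hpre] at h2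
  rw [← h2]
  exact setIntegral_mono_set h1.norm (ae_of_all _ fun _ => norm_nonneg _)
    (LE.le.eventuallyLE hsub)

lemma aux_ibp (α : Fin 2) {u v : (EuclideanSpace ℝ (Fin 2)) → ℝ} (hu : ContDiff ℝ 1 u) (hv : ContDiff ℝ 1 v)
    (hs : HasCompactSupport v) :
    ∫ p, u p * pd α v p = - ∫ p, pd α u p * v p := by
  unfold pd
  have hdu : Continuous (fun p => fderiv ℝ u p (EuclideanSpace.single α 1)) :=
    (hu.continuous_fderiv one_ne_zero).clm_apply continuous_const
  have hdv : Continuous (fun p => fderiv ℝ v p (EuclideanSpace.single α 1)) :=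
    (hv.continuous_fderiv one_ne_zero).clm_apply continuous_const
  apply integral_mul_fderiv_eq_neg_fderiv_mul_of_integrable
  · exact (hdu.mul hv.continuous).integrable_of_hasCompactSupport hs.mul_left
  · exact (hu.continuous.mul hdv).integrable_of_hasCompactSupport
      (hs.fderiv_apply ℝ _).mul_left
  · exact (hu.continuous.mul hv.continuous).integrable_of_hasCompactSupport hs.mul_left
  · intro x _; exact hu.differentiable one_ne_zero x
  · intro x _; exact hv.differentiable one_ne_zero x

lemma aux_pd_cd (α : Fin 2) {u : (EuclideanSpace ℝ (Fin 2)) → ℝ} (hu : ContDiff ℝ (⊤ : ℕ∞) u) :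
    ContDiff ℝ (⊤ : ℕ∞) (pd α u) :=
  (hu.fderiv_right (m := (⊤ : ℕ∞)) (by simp)).clm_apply contDiff_const

lemma aux_pd_cs (α : Fin 2) {u : (EuclideanSpace ℝ (Fin 2)) → ℝ} (hu : HasCompactSupport u) :
    HasCompactSupport (pd α u) := hu.fderiv_apply ℝ _

lemma aux_cd1 {u : (EuclideanSpace ℝ (Fin 2)) → ℝ} (hu : ContDiff ℝ (⊤ : ℕ∞) u) : ContDiff ℝ 1 u :=
  hu.of_le (by exact_mod_cast le_top)

lemma aux_green {u v : (EuclideanSpace ℝ (Fin 2)) → ℝ} (hu : ContDiff ℝ (⊤ : ℕ∞) u) (hv : ContDiff ℝ (⊤ : ℕ∞) v)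
    (hs : HasCompactSupport v) :
    ∫ p, u p * lap v p = ∫ p, lap u p * v p := by
  unfold lap
  simp_rw [Finset.mul_sum, Finset.sum_mul]
  rw [integral_finsetSum, integral_finsetSum]
  · refine Finset.sum_congr rfl fun α _ => ?_
    rw [aux_ibp α (aux_cd1 hu) (aux_cd1 (aux_pd_cd α hv)) (aux_pd_cs α hs),
      aux_ibp α (aux_cd1 (aux_pd_cd α hu)) (aux_cd1 hv) hs, neg_neg]
  · intro α _
    exact ((aux_pd_cd α (aux_pd_cd α hu)).continuous.mul
      hv.continuous).integrable_of_hasCompactSupport hs.mul_left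
  · intro α _
    exact (hu.continuous.mul
      (aux_pd_cd α (aux_pd_cd α hv)).continuous).integrable_of_hasCompactSupport
      (aux_pd_cs α (aux_pd_cs α hs)).mul_left

lemma aux_lap_cont {u : (EuclideanSpace ℝ (Fin 2)) → ℝ} (hu : ContDiff ℝ (⊤ : ℕ∞) u) : Continuous (lap u) := by
  unfold lap
  exact continuous_finsetSum _ fun α _ => (aux_pd_cd α (aux_pd_cd α hu)).continuous

lemma aux_lap_cs {u : (EuclideanSpace ℝ (Fin 2)) → ℝ} (hs : HasCompactSupport u) : HasCompactSupport (lap u) := by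
  have h : lap u = pd 0 (pd 0 u) + pd 1 (pd 1 u) := by
    ext p; simp [lap, Fin.sum_univ_two]
  rw [h]
  exact (aux_pd_cs 0 (aux_pd_cs 0 hs)).add (aux_pd_cs 1 (aux_pd_cs 1 hs))

/-- regularised logarithm -/
noncomputable def regLog (e : ℝ) (p : EuclideanSpace ℝ (Fin 2)) : ℝ :=
  1 / 2 * Real.log (‖p‖ ^ 2 + e ^ 2)

lemma regLog_cd {e : ℝ} (he : 0 < e) : ContDiff ℝ (⊤ : ℕ∞) (regLog e) := by
  unfold regLog
  refine contDiff_const.mul (ContDiff.log ?_ fun p => by positivity)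
  exact (contDiff_norm_sq ℝ).add contDiff_const

lemma pd_regLog {e : ℝ} (he : 0 < e) (α : Fin 2) :
    pd α (regLog e) = fun p => p α / (‖p‖ ^ 2 + e ^ 2) := by
  ext p
  have hpos : ‖p‖ ^ 2 + e ^ 2 ≠ 0 := by positivity
  have h1 := ((hasStrictFDerivAt_norm_sq p).hasFDerivAt.add_const (e ^ 2))
  have h2 := (h1.log hpos).const_mul (1 / 2)
  unfold pd
  rw [show regLog e = fun p => 1 / 2 * Real.log (‖p‖ ^ 2 + e ^ 2) from rfl, h2.fderiv]
  simp [EuclideanSpace.inner_single_right]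
  field_simp

lemma lap_regLog {e : ℝ} (he : 0 < e) (p : (EuclideanSpace ℝ (Fin 2))) :
    lap (regLog e) p = 2 * e ^ 2 / (‖p‖ ^ 2 + e ^ 2) ^ 2 := by
  have hpos : ‖p‖ ^ 2 + e ^ 2 ≠ 0 := by positivity
  have key : ∀ α : Fin 2, pd α (pd α (regLog e)) p =
      1 / (‖p‖ ^ 2 + e ^ 2) - 2 * (p α) ^ 2 / (‖p‖ ^ 2 + e ^ 2) ^ 2 := by
    intro α
    rw [pd_regLog he]
    have h1 := ((hasStrictFDerivAt_norm_sq p).hasFDerivAt.add_const (e ^ 2))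
    have h0 : HasFDerivAt (fun p : (EuclideanSpace ℝ (Fin 2)) => p α) (EuclideanSpace.proj α : (EuclideanSpace ℝ (Fin 2)) →L[ℝ] ℝ) p :=
      (EuclideanSpace.proj α : (EuclideanSpace ℝ (Fin 2)) →L[ℝ] ℝ).hasFDerivAt
    have h2 := h0.mul ((hasDerivAt_inv hpos).comp_hasFDerivAt p h1)
    unfold pd
    simp_rw [div_eq_mul_inv]
    have h3 : fderiv ℝ (fun p : (EuclideanSpace ℝ (Fin 2)) => p α * (‖p‖ ^ 2 + e ^ 2)⁻¹) p = _ := HasFDerivAt.fderiv h2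
    rw [h3]
    simp [EuclideanSpace.inner_single_right]
    field_simp
    ring
  unfold lap
  simp_rw [key]
  have hn : ‖p‖ ^ 2 = p 0 ^ 2 + p 1 ^ 2 := by
    rw [EuclideanSpace.norm_sq_eq]; simp [Fin.sum_univ_two]
  rw [Fin.sum_univ_two]
  field_simp
  rw [hn]
  ring

lemma aux_kernel : Integrable (fun q : (EuclideanSpace ℝ (Fin 2)) => 2 / (‖q‖ ^ 2 + 1) ^ 2) ∧
    ∫ q : (EuclideanSpace ℝ (Fin 2)), 2 / (‖q‖ ^ 2 + 1) ^ 2 = 2 * π := by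
  have hd : ∀ y ∈ Ici (0 : ℝ), HasDerivAt (fun y : ℝ => -(y ^ 2 + 1)⁻¹)
      (y * (2 / (y ^ 2 + 1) ^ 2)) y := by
    intro y _
    have hpos : y ^ 2 + 1 ≠ 0 := by positivity
    have h := (((hasDerivAt_pow 2 y).add_const 1).fun_inv hpos).fun_neg
    have e : y * (2 / (y ^ 2 + 1) ^ 2) = -(-(((2 : ℕ) : ℝ) * y ^ (2 - 1)) / (y ^ 2 + 1) ^ 2) := by
      push_cast
      simp only [pow_one]
      ring
    rw [e]
    exact h
  have ht : Tendsto (fun y : ℝ => -(y ^ 2 + 1)⁻¹) atTop (𝓝 0) := by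
    have : Tendsto (fun y : ℝ => y ^ 2 + 1) atTop atTop :=
      tendsto_atTop_add_const_right _ _ (tendsto_pow_atTop two_ne_zero)
    simpa using this.inv_tendsto_atTop.neg
  have hnn : ∀ y ∈ Ioi (0 : ℝ), 0 ≤ y * (2 / (y ^ 2 + 1) ^ 2) := by
    intro y hy
    have : (0 : ℝ) < y := hy
    positivity
  have hI := integrableOn_Ioi_deriv_of_nonneg' hd hnn ht
  have hV := integral_Ioi_of_hasDerivAt_of_tendsto' hd hI ht
  constructor
  · rw [integrable_fun_norm_addHaar volume (f := fun y : ℝ => 2 / (y ^ 2 + 1) ^ 2)]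
    simpa using hI
  · rw [integral_fun_norm_addHaar volume (fun y : ℝ => 2 / (y ^ 2 + 1) ^ 2)]
    simp only [finrank_euclideanSpace, Fintype.card_fin, smul_eq_mul, nsmul_eq_mul,
      Nat.add_one_sub_one, pow_one]
    rw [hV]
    simp [Measure.real, pi_pos.le]

lemma aux_rhs {e : ℝ} (he : 0 < e) (φ : (EuclideanSpace ℝ (Fin 2)) → ℝ) :
    ∫ p, lap (regLog e) p * φ p = ∫ q : (EuclideanSpace ℝ (Fin 2)), 2 / (‖q‖ ^ 2 + 1) ^ 2 * φ (e • q) := by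
  have h := Measure.integral_comp_smul_of_nonneg (volume : Measure (EuclideanSpace ℝ (Fin 2)))
    (fun p => lap (regLog e) p * φ p) e (hR := he.le)
  rw [smul_eq_mul, eq_inv_mul_iff_mul_eq₀ (by positivity)] at h
  rw [← h, ← integral_const_mul]
  congr 1
  ext q
  rw [lap_regLog he, norm_smul, Real.norm_of_nonneg he.le]
  simp only [finrank_euclideanSpace, Fintype.card_fin]
  have : (e * ‖q‖) ^ 2 + e ^ 2 = e ^ 2 * (‖q‖ ^ 2 + 1) := by ring
  rw [this]
  field_simp

lemma aux_fund0 {φ : (EuclideanSpace ℝ (Fin 2)) → ℝ} (hφ : ContDiff ℝ (⊤ : ℕ∞) φ) (hs : HasCompactSupport φ) :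
    ∫ p : (EuclideanSpace ℝ (Fin 2)), Real.log ‖p‖ * lap φ p = 2 * π * φ 0 := by
  have he : Tendsto (fun n : ℕ => 1 / ((n : ℝ) + 1)) atTop (𝓝 0) :=
    tendsto_one_div_add_atTop_nhds_zero_nat
  have hpos : ∀ n : ℕ, 0 < 1 / ((n : ℝ) + 1) := fun n => by positivity
  have hle : ∀ n : ℕ, 1 / ((n : ℝ) + 1) ≤ 1 := fun n => by
    rw [div_le_one (by positivity)]; linarith [(Nat.cast_nonneg n : (0 : ℝ) ≤ n)]
  obtain ⟨M, hM⟩ := hs.exists_bound_of_continuous hφ.continuous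
  have hR : Tendsto (fun n : ℕ => ∫ q : (EuclideanSpace ℝ (Fin 2)), 2 / (‖q‖ ^ 2 + 1) ^ 2 * φ ((1 / ((n : ℝ) + 1)) • q))
      atTop (𝓝 (∫ q : (EuclideanSpace ℝ (Fin 2)), 2 / (‖q‖ ^ 2 + 1) ^ 2 * φ 0)) := by
    refine tendsto_integral_of_dominated_convergence
      (fun q : (EuclideanSpace ℝ (Fin 2)) => 2 / (‖q‖ ^ 2 + 1) ^ 2 * M) ?_ (aux_kernel.1.mul_const M) ?_ ?_
    · intro n
      refine aux_kernel.1.1.mul (Continuous.aestronglyMeasurable ?_)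
      exact hφ.continuous.comp (continuous_const_smul _)
    · intro n
      refine ae_of_all _ fun q => ?_
      rw [norm_mul, Real.norm_of_nonneg (by positivity : 0 ≤ 2 / (‖q‖ ^ 2 + 1) ^ 2)]
      exact mul_le_mul_of_nonneg_left (hM _) (by positivity)
    · refine ae_of_all _ fun q => ?_
      refine tendsto_const_nhds.mul ?_
      have h0 : Tendsto (fun n : ℕ => (1 / ((n : ℝ) + 1)) • q) atTop (𝓝 0) := by
        simpa using he.smul_const q
      exact (hφ.continuous.tendsto 0).comp h0
  rw [integral_mul_const, aux_kernel.2] at hR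
  have hlc := aux_lap_cont hφ
  have hls := aux_lap_cs hs
  obtain ⟨K, hK⟩ := hls.exists_bound_of_continuous hlc
  obtain ⟨ρ, hρ⟩ := hls.isCompact.isBounded.subset_ball (0 : (EuclideanSpace ℝ (Fin 2)))
  have hz : ∀ p : (EuclideanSpace ℝ (Fin 2)), p ∉ Metric.ball (0 : (EuclideanSpace ℝ (Fin 2))) ρ → lap φ p = 0 := fun p hp =>
    image_eq_zero_of_notMem_tsupport fun h => hp (hρ h)
  have hset : ∀ g : (EuclideanSpace ℝ (Fin 2)) → ℝ, ∫ p in Metric.ball (0 : (EuclideanSpace ℝ (Fin 2))) ρ, g p * lap φ p =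
      ∫ p, g p * lap φ p := fun g =>
    setIntegral_eq_integral_of_forall_compl_eq_zero fun p hp => by rw [hz p hp, mul_zero]
  have hL : Tendsto (fun n : ℕ => ∫ p in Metric.ball (0 : (EuclideanSpace ℝ (Fin 2))) ρ,
      regLog (1 / ((n : ℝ) + 1)) p * lap φ p) atTop
      (𝓝 (∫ p in Metric.ball (0 : (EuclideanSpace ℝ (Fin 2))) ρ, Real.log ‖p‖ * lap φ p)) := by
    have hb2 : IntegrableOn (regLog 1) (Metric.ball (0 : (EuclideanSpace ℝ (Fin 2))) ρ) volume :=
      ((regLog_cd one_pos).continuous.continuousOn.integrableOn_compact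
        (isCompact_closedBall 0 ρ)).mono_set Metric.ball_subset_closedBall
    refine tendsto_integral_of_dominated_convergence
      (fun p : (EuclideanSpace ℝ (Fin 2)) => (‖Real.log ‖p‖‖ + regLog 1 p) * K) ?_
      (((aux_log_ball ρ).norm.add hb2).mul_const K) ?_ ?_
    · intro n
      exact ((regLog_cd (hpos n)).continuous.mul hlc).aestronglyMeasurable
    · intro n
      have hne : ∀ᵐ p : (EuclideanSpace ℝ (Fin 2)) ∂(volume.restrict (Metric.ball (0 : (EuclideanSpace ℝ (Fin 2))) ρ)), p ≠ 0 :=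
        ae_restrict_of_ae (Measure.ae_ne volume 0)
      filter_upwards [hne] with p hp
      rw [norm_mul]
      have hp' : 0 < ‖p‖ := norm_pos_iff.2 hp
      have e1 : Real.log ‖p‖ ≤ regLog (1 / ((n : ℝ) + 1)) p := by
        have : Real.log (‖p‖ ^ 2) ≤ Real.log (‖p‖ ^ 2 + (1 / ((n : ℝ) + 1)) ^ 2) :=
          Real.log_le_log (by positivity) (by nlinarith [sq_nonneg (1 / ((n : ℝ) + 1))])
        rw [Real.log_pow] at this
        unfold regLog
        push_cast at this
        linarith
      have e2 : regLog (1 / ((n : ℝ) + 1)) p ≤ regLog 1 p := by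
        unfold regLog
        have h1 : (1 / ((n : ℝ) + 1)) ^ 2 ≤ 1 ^ 2 :=
          pow_le_pow_left₀ (hpos n).le (hle n) 2
        have : Real.log (‖p‖ ^ 2 + (1 / ((n : ℝ) + 1)) ^ 2) ≤ Real.log (‖p‖ ^ 2 + 1 ^ 2) :=
          Real.log_le_log (by positivity) (by linarith)
        linarith
      have e3 : 0 ≤ regLog 1 p := by
        unfold regLog
        have : 0 ≤ Real.log (‖p‖ ^ 2 + 1 ^ 2) := Real.log_nonneg (by nlinarith)
        positivity
      refine mul_le_mul ?_ (hK p) (norm_nonneg _) (by positivity)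
      rw [Real.norm_eq_abs, Real.norm_eq_abs, abs_le]
      constructor
      · linarith [neg_abs_le (Real.log ‖p‖)]
      · linarith [abs_nonneg (Real.log ‖p‖)]
    · have hne : ∀ᵐ p : (EuclideanSpace ℝ (Fin 2)) ∂(volume.restrict (Metric.ball (0 : (EuclideanSpace ℝ (Fin 2))) ρ)), p ≠ 0 :=
        ae_restrict_of_ae (Measure.ae_ne volume 0)
      filter_upwards [hne] with p hp
      have hp' : 0 < ‖p‖ := norm_pos_iff.2 hp
      refine Tendsto.mul_const _ ?_
      have h1 : Tendsto (fun n : ℕ => ‖p‖ ^ 2 + (1 / ((n : ℝ) + 1)) ^ 2) atTop (𝓝 (‖p‖ ^ 2)) := by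
        simpa using (he.pow 2).const_add (‖p‖ ^ 2)
      have h2 := (h1.log (by positivity)).const_mul (1 / 2)
      rw [Real.log_pow] at h2
      have h3 : 1 / 2 * (((2 : ℕ) : ℝ) * Real.log ‖p‖) = Real.log ‖p‖ := by push_cast; ring
      rw [h3] at h2
      exact h2
  rw [hset] at hL
  simp_rw [hset] at hL
  refine tendsto_nhds_unique hL ?_
  refine hR.congr fun n => ?_
  rw [aux_green (regLog_cd (hpos n)) hφ hs, aux_rhs (hpos n)]

lemma aux_pd_shift (α : Fin 2) (u : (EuclideanSpace ℝ (Fin 2)) → ℝ) (a p : (EuclideanSpace ℝ (Fin 2))) :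
    pd α (fun q => u (q + a)) p = pd α u (p + a) := by
  unfold pd
  rw [fderiv_comp_add_right]

lemma aux_fund {φ : (EuclideanSpace ℝ (Fin 2)) → ℝ} (hφ : ContDiff ℝ (⊤ : ℕ∞) φ) (hs : HasCompactSupport φ) (a : (EuclideanSpace ℝ (Fin 2))) :
    ∫ p : (EuclideanSpace ℝ (Fin 2)), Real.log ‖p - a‖ * lap φ p = 2 * π * φ a := by
  have h := aux_fund0 (φ := fun q => φ (q + a)) (hφ.comp (contDiff_id.add contDiff_const))
    (hs.comp_homeomorph (Homeomorph.addRight a))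
  rw [zero_add] at h
  rw [← h, ← integral_add_right_eq_self _ a]
  congr 1
  ext p
  rw [add_sub_cancel_right]
  congr 1
  unfold lap
  refine Finset.sum_congr rfl fun α _ => ?_
  have : pd α (fun q => φ (q + a)) = fun q => pd α φ (q + a) := by
    ext q; exact aux_pd_shift α φ a q
  rw [this, aux_pd_shift]

theorem log_potential_of_summable_weights
    (R : ℝ) (hR : 0 < R) (x : ℕ → EuclideanSpace ℝ (Fin 2))
    (hx : ∀ i, x i ∈ Metric.closedBall (0 : EuclideanSpace ℝ (Fin 2)) R)
    (c : ℕ → ℝ) (hc : Summable fun i => |c i|) :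
    (∀ᵐ p : EuclideanSpace ℝ (Fin 2),
      Summable fun i => |c i / (2 * π) * Real.log ‖p - x i‖|) ∧
    (∀ A : Set (EuclideanSpace ℝ (Fin 2)), MeasurableSet A → Bornology.IsBounded A →
      IntegrableOn (fun p => ∑' i, c i / (2 * π) * Real.log ‖p - x i‖) A volume) ∧
    (∀ φ : EuclideanSpace ℝ (Fin 2) → ℝ, ContDiff ℝ (⊤ : ℕ∞) φ → HasCompactSupport φ →
      ∫ p : EuclideanSpace ℝ (Fin 2),
          (∑' i, c i / (2 * π) * Real.log ‖p - x i‖) * lap φ p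
        = ∑' i, c i * φ (x i)) := by
  have hxn : ∀ i, ‖x i‖ ≤ R := fun i => mem_closedBall_zero_iff.1 (hx i)
  have hint : ∀ (r : ℝ) (i : ℕ), IntegrableOn (fun p => c i / (2 * π) * Real.log ‖p - x i‖)
      (Metric.ball 0 r) volume := fun r i => (aux_log_shift R r (x i) (hxn i)).1.const_mul _
  have hle : ∀ (r : ℝ) (i : ℕ), ∫ p in Metric.ball (0 : (EuclideanSpace ℝ (Fin 2))) r,
      ‖c i / (2 * π) * Real.log ‖p - x i‖‖ ≤
      |c i| * (1 / (2 * π) * ∫ p in Metric.ball (0 : (EuclideanSpace ℝ (Fin 2))) (r + R), ‖Real.log ‖p‖‖) := by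
    intro r i
    simp_rw [norm_mul]
    rw [integral_const_mul, norm_div, Real.norm_of_nonneg (by positivity : 0 ≤ 2 * π),
      Real.norm_eq_abs, ← mul_assoc, mul_one_div]
    exact mul_le_mul_of_nonneg_left (aux_log_shift R r (x i) (hxn i)).2 (by positivity)
  have hsum : ∀ r : ℝ, Summable fun i => ∫ p in Metric.ball (0 : (EuclideanSpace ℝ (Fin 2))) r,
      ‖c i / (2 * π) * Real.log ‖p - x i‖‖ := fun r =>
    Summable.of_nonneg_of_le (fun i => integral_nonneg fun _ => norm_nonneg _) (hle r)
      (hc.mul_right _)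
  refine ⟨?_, ?_, ?_⟩
  · have h : ∀ᵐ p : (EuclideanSpace ℝ (Fin 2)), ∀ n : ℕ, p ∈ Metric.ball (0 : (EuclideanSpace ℝ (Fin 2))) n →
        Summable fun i => |c i / (2 * π) * Real.log ‖p - x i‖| := by
      rw [ae_all_iff]
      intro n
      rw [← ae_restrict_iff' measurableSet_ball]
      exact (aux_tsum _ (hint n) (hsum n)).1
    filter_upwards [h] with p hp
    obtain ⟨n, hn⟩ := exists_nat_gt ‖p‖
    exact hp n (mem_ball_zero_iff.2 hn)
  · intro A _ hA
    obtain ⟨r, hr⟩ := hA.subset_ball (0 : (EuclideanSpace ℝ (Fin 2)))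
    exact IntegrableOn.mono_set (aux_tsum _ (hint r) (hsum r)).2 hr
  · intro φ hφ hs
    have hlc := aux_lap_cont hφ
    have hls := aux_lap_cs hs
    obtain ⟨K, hK⟩ := hls.exists_bound_of_continuous hlc
    have hK0 : 0 ≤ K := (norm_nonneg _).trans (hK 0)
    obtain ⟨ρ, hρ⟩ := hls.isCompact.isBounded.subset_ball (0 : (EuclideanSpace ℝ (Fin 2)))
    have hset : ∀ g : (EuclideanSpace ℝ (Fin 2)) → ℝ, ∫ p in Metric.ball (0 : (EuclideanSpace ℝ (Fin 2))) ρ, g p * lap φ p =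
        ∫ p, g p * lap φ p := fun g =>
      setIntegral_eq_integral_of_forall_compl_eq_zero fun p hp => by
        rw [image_eq_zero_of_notMem_tsupport fun h => hp (hρ h), mul_zero]
    have hI : ∀ i, IntegrableOn (fun p => c i / (2 * π) * Real.log ‖p - x i‖ * lap φ p)
        (Metric.ball 0 ρ) volume := fun i =>
      (hint ρ i).mul_bdd hlc.aestronglyMeasurable (ae_of_all _ hK)
    have hS : Summable fun i => ∫ p in Metric.ball (0 : (EuclideanSpace ℝ (Fin 2))) ρ,
        ‖c i / (2 * π) * Real.log ‖p - x i‖ * lap φ p‖ := by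
      refine Summable.of_nonneg_of_le (fun i => integral_nonneg fun _ => norm_nonneg _) ?_
        ((hsum ρ).mul_right K)
      intro i
      rw [← integral_mul_const]
      refine integral_mono (hI i).norm ((hint ρ i).norm.mul_const K) fun p => ?_
      simp only [norm_mul (_ * _) (lap φ p)]
      exact mul_le_mul_of_nonneg_left (hK p) (norm_nonneg _)
    rw [← hset]
    simp_rw [← tsum_mul_right]
    rw [← (hasSum_integral_of_summable_integral_norm hI hS).tsum_eq]
    refine tsum_congr fun i => ?_
    rw [hset (fun p => c i / (2 * π) * Real.log ‖p - x i‖)]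
    simp_rw [mul_assoc]
    rw [integral_const_mul, aux_fund hφ hs]
    field_simp
end

section
/- Let R > 0, let (x_i)_{i∈ℕ} be points of the closed ball B̄(0,R) ⊆ ℝ², and let (c_i)_{i∈ℕ} be real numbers with ∑_i |c_i| < ∞. Set ℱ(x) := ∑_i (c_i/2π) log|x − x_i| and, for α ∈ {1,2}, G_α(x) := ∑_i (c_i/2π) (x − x_i)_α / |x − x_i|². Then both series converge absolutely for Lebesgue-almost every x ∈ ℝ², ℱ and G₁, G₂ are integrable on every bounded measurable subset of ℝ², and G is the distributional gradient of ℱ: for every φ ∈ C_c^∞(ℝ²) and α ∈ {1,2}, ∫_{ℝ²} ℱ(x) ∂_αφ(x) dx = −∫_{ℝ²} G_α(x) φ(x) dx. -/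
open MeasureTheory Real

namespace LogPot

open Set Filter Topology ENNReal

abbrev E2 := EuclideanSpace ℝ (Fin 2)

lemma lint_translate (k : E2 → ℝ) (R ρ : ℝ) (a : E2) (ha : ‖a‖ ≤ R) :
    ∫⁻ p in Metric.closedBall (0 : E2) ρ, ‖k (p - a)‖ₑ
      ≤ ∫⁻ q in Metric.closedBall (0 : E2) (ρ + R), ‖k q‖ₑ := by
  rw [← lintegral_indicator Metric.isClosed_closedBall.measurableSet,
    ← lintegral_indicator Metric.isClosed_closedBall.measurableSet,
    ← lintegral_sub_right_eq_self
      ((Metric.closedBall (0 : E2) (ρ + R)).indicator fun q => ‖k q‖ₑ) a]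
  apply lintegral_mono
  intro p
  by_cases hp : p ∈ Metric.closedBall (0 : E2) ρ
  · have : p - a ∈ Metric.closedBall (0 : E2) (ρ + R) := by
      simp only [mem_closedBall_zero_iff] at hp ⊢
      exact (norm_sub_le _ _).trans (add_le_add hp ha)
    simp [indicator_of_mem hp, indicator_of_mem this]
  · simp [indicator_of_notMem hp]

section
variable (R : ℝ) (x : ℕ → E2) (hx : ∀ i, ‖x i‖ ≤ R) (d : ℕ → ℝ) (hd : Summable fun i => |d i|)
  (k : E2 → ℝ) (hk : Measurable k) (hki : ∀ ρ, IntegrableOn k (Metric.closedBall (0 : E2) ρ))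
include hx hd hki

lemma tsum_lint (ρ : ℝ) :
    ∑' i, ∫⁻ p in Metric.closedBall (0 : E2) ρ, ‖d i * k (p - x i)‖ₑ ≠ ⊤ := by
  have hM := (hki (ρ + R)).2
  rw [HasFiniteIntegral] at hM
  have h1 : ∑' i, ∫⁻ p in Metric.closedBall (0 : E2) ρ, ‖d i * k (p - x i)‖ₑ
      ≤ ∑' i, ‖d i‖ₑ * ∫⁻ q in Metric.closedBall (0 : E2) (ρ + R), ‖k q‖ₑ := by
    refine ENNReal.tsum_le_tsum fun i => ?_
    simp only [enorm_mul]
    rw [lintegral_const_mul' _ _ (by simp)]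
    exact mul_le_mul_right (lint_translate k R ρ _ (hx i)) _
  refine ne_top_of_le_ne_top ?_ h1
  rw [ENNReal.tsum_mul_right]
  exact ENNReal.mul_ne_top (tsum_enorm_ne_top_iff_summable_norm.2 hd) hM.ne

include hk in
lemma ae_summable_ball (ρ : ℝ) : ∀ᵐ p ∂(volume.restrict (Metric.closedBall (0 : E2) ρ)),
    Summable fun i => |d i * k (p - x i)| := by
  have h := tsum_lint R x hx d hd k hki ρ
  have hm : ∀ i, AEMeasurable (fun p => ‖d i * k (p - x i)‖ₑ)
      (volume.restrict (Metric.closedBall (0 : E2) ρ)) := fun i => by fun_prop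
  rw [← lintegral_tsum hm] at h
  refine (ae_lt_top' (AEMeasurable.tsum hm) h).mono ?_
  intro p hp
  exact tsum_enorm_ne_top_iff_summable_norm.1 hp.ne

include hk in
lemma ae_summable : ∀ᵐ p : E2, Summable fun i => |d i * k (p - x i)| := by
  have h := (ae_restrict_iUnion_iff (μ := volume) (fun n : ℕ => Metric.closedBall (0 : E2) n)
    (fun p => Summable fun i => |d i * k (p - x i)|)).2
    (fun n => ae_summable_ball R x hx d hd k hk hki n)
  rwa [Metric.iUnion_closedBall_nat, Measure.restrict_univ] at h

include hk in
lemma integrableOn_tsum (ρ : ℝ) :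
    IntegrableOn (fun p => ∑' i, d i * k (p - x i)) (Metric.closedBall (0 : E2) ρ) := by
  have hm : ∀ i, AEMeasurable (fun p => ‖d i * k (p - x i)‖ₑ)
      (volume.restrict (Metric.closedBall (0 : E2) ρ)) := fun i => by fun_prop
  refine ⟨?_, ?_⟩
  · refine aestronglyMeasurable_of_tendsto_ae (u := atTop)
      (f := fun (s : ℕ) p => ∑ i ∈ Finset.range s, d i * k (p - x i)) ?_ ?_
    · intro s
      exact Measurable.aestronglyMeasurable (by fun_prop)
    · filter_upwards [ae_summable_ball R x hx d hd k hk hki ρ] with p hp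
      exact (Summable.of_abs hp).hasSum.tendsto_sum_nat
  · have h := tsum_lint R x hx d hd k hki ρ
    rw [← lintegral_tsum hm] at h
    refine lt_of_le_of_lt (lintegral_mono fun p => ?_) (lt_top_iff_ne_top.2 h)
    exact enorm_tsum_le_tsum_enorm

include hk in
lemma integral_tsum_mul (ψ : E2 → ℝ) (hψ : Continuous ψ) (hs : HasCompactSupport ψ) :
    ∫ p : E2, (∑' i, d i * k (p - x i)) * ψ p = ∑' i, d i * ∫ p : E2, k (p - x i) * ψ p := by
  obtain ⟨ρ, hρ⟩ := hs.isCompact.isBounded.subset_closedBall (0 : E2)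
  obtain ⟨C, hC⟩ := hs.exists_bound_of_continuous hψ
  have hz : ∀ p, p ∉ Metric.closedBall (0 : E2) ρ → ψ p = 0 := fun p hp =>
    image_eq_zero_of_notMem_tsupport fun h => hp (hρ h)
  have hm : ∀ i, AEStronglyMeasurable (fun p => d i * k (p - x i) * ψ p)
      (volume.restrict (Metric.closedBall (0 : E2) ρ)) := fun i =>
    Measurable.aestronglyMeasurable (by have := hψ.measurable; fun_prop)
  rw [← setIntegral_eq_integral_of_forall_compl_eq_zero (s := Metric.closedBall (0 : E2) ρ)
    (fun p hp => by rw [hz p hp, mul_zero])]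
  simp_rw [← tsum_mul_right]
  rw [integral_tsum hm]
  · congr 1; ext i
    rw [setIntegral_eq_integral_of_forall_compl_eq_zero
      (fun p hp => by rw [hz p hp, mul_zero])]
    simp_rw [mul_assoc]
    rw [integral_const_mul]
  · have h1 : ∑' i, ∫⁻ p in Metric.closedBall (0 : E2) ρ, ‖d i * k (p - x i) * ψ p‖ₑ
      ≤ ∑' i, (∫⁻ p in Metric.closedBall (0 : E2) ρ, ‖d i * k (p - x i)‖ₑ) * ENNReal.ofReal C := by
      refine ENNReal.tsum_le_tsum fun i => ?_
      rw [← lintegral_mul_const' _ _ (by simp)]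
      refine lintegral_mono fun p => ?_
      simp only
      rw [enorm_mul]
      gcongr
      rw [← ofReal_norm]
      exact ENNReal.ofReal_le_ofReal (hC p)
    refine ne_top_of_le_ne_top ?_ h1
    rw [ENNReal.tsum_mul_right]
    exact ENNReal.mul_ne_top (tsum_lint R x hx d hd k hki ρ) (by simp)

end

lemma integrableOn_inv (ρ : ℝ) :
    IntegrableOn (fun p : E2 => ‖p‖⁻¹) (Metric.closedBall (0 : E2) ρ) := by
  rw [← integrable_indicator_iff Metric.isClosed_closedBall.measurableSet]
  have h : (Metric.closedBall (0 : E2) ρ).indicator (fun p : E2 => ‖p‖⁻¹)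
      = fun p => (Iic ρ).indicator (fun r : ℝ => r⁻¹) ‖p‖ := by
    ext p
    simp only [indicator, mem_closedBall_zero_iff, mem_Iic]
  rw [h, integrable_fun_norm_addHaar (μ := volume) (f := (Iic ρ).indicator (fun r : ℝ => r⁻¹))]
  have h2 : IntegrableOn ((Iic ρ).indicator (fun _ : ℝ => (1 : ℝ))) (Ioi 0) := by
    rw [IntegrableOn, integrable_indicator_iff measurableSet_Iic, IntegrableOn,
      Measure.restrict_restrict measurableSet_Iic, inter_comm, Ioi_inter_Iic]
    exact integrableOn_const (by simp)
  refine h2.congr_fun ?_ measurableSet_Ioi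
  intro r hr
  have hr' : r ≠ 0 := (mem_Ioi.1 hr).ne'
  by_cases h : r ≤ ρ <;> simp [indicator, h, hr']

lemma inv_mul_integrable (ψ : E2 → ℝ) (hψ : Continuous ψ) (hs : HasCompactSupport ψ) :
    Integrable (fun p : E2 => ‖p‖⁻¹ * ψ p) := by
  have hl : LocallyIntegrable (fun p : E2 => ‖p‖⁻¹) volume := by
    rw [locallyIntegrable_iff]
    intro K hK
    obtain ⟨ρ, hρ⟩ := hK.isBounded.subset_closedBall (0 : E2)
    exact (integrableOn_inv ρ).mono_set hρ
  simpa [mul_comm] using hl.integrable_smul_right_of_hasCompactSupport hψ hs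

lemma abs_log_le {r : ℝ} (hr : 0 ≤ r) : |Real.log r| ≤ r + r⁻¹ := by
  rcases hr.eq_or_lt with rfl | h
  · simp
  · have h1 := Real.log_le_sub_one_of_pos h
    have h2 := Real.log_le_sub_one_of_pos (inv_pos.2 h)
    rw [Real.log_inv] at h2
    have := inv_pos.2 h
    rw [abs_le]; constructor <;> linarith

lemma log_integrableOn (ρ : ℝ) :
    IntegrableOn (fun p : E2 => Real.log ‖p‖) (Metric.closedBall (0 : E2) ρ) := by
  have h1 : IntegrableOn (fun p : E2 => ‖p‖) (Metric.closedBall (0 : E2) ρ) :=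
    continuous_norm.continuousOn.integrableOn_compact (isCompact_closedBall _ _)
  refine Integrable.mono' (h1.add (integrableOn_inv ρ))
    (Measurable.aestronglyMeasurable (by fun_prop)) (.of_forall fun p => ?_)
  exact abs_log_le (norm_nonneg p)

lemma ker_le (p : E2) (α : Fin 2) : |p α / ‖p‖ ^ 2| ≤ ‖p‖⁻¹ := by
  rcases eq_or_ne p 0 with rfl | hp
  · simp
  have h := PiLp.norm_apply_le p α
  have hp' := norm_pos_iff.2 hp
  rw [Real.norm_eq_abs] at h
  rw [abs_div, abs_of_nonneg (by positivity : 0 ≤ ‖p‖ ^ 2), div_le_iff₀ (by positivity), pow_two,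
    inv_mul_cancel_left₀ hp'.ne']
  exact h

lemma ker_integrableOn (α : Fin 2) (ρ : ℝ) :
    IntegrableOn (fun p : E2 => p α / ‖p‖ ^ 2) (Metric.closedBall (0 : E2) ρ) := by
  refine Integrable.mono' (integrableOn_inv ρ)
    (Measurable.aestronglyMeasurable (by fun_prop)) (.of_forall fun p => ?_)
  exact ker_le p α

lemma fderiv_reg {e : ℝ} (he : 0 < e) (p : E2) :
    HasFDerivAt (fun p : E2 => (1 / 2 : ℝ) * Real.log (‖p‖ ^ 2 + e))
      ((1 / 2 : ℝ) • ((‖p‖ ^ 2 + e)⁻¹ • (2 • innerSL ℝ p))) p := by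
  have h1 : HasFDerivAt (fun p : E2 => ‖p‖ ^ 2 + e) (2 • innerSL ℝ p) p := by
    have := (hasStrictFDerivAt_norm_sq p).hasFDerivAt.add_const e
    simpa using this
  exact (h1.log (by positivity)).const_mul (1 / 2)

lemma reg_ibp {e : ℝ} (he : 0 < e) (φ : E2 → ℝ) (hφ : ContDiff ℝ (⊤ : ℕ∞) φ)
    (hs : HasCompactSupport φ) (α : Fin 2) :
    ∫ p : E2, (1 / 2 * Real.log (‖p‖ ^ 2 + e)) * pd α φ p
      = -∫ p : E2, (p α / (‖p‖ ^ 2 + e)) * φ p := by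
  have hf : ∀ p, fderiv ℝ (fun p : E2 => (1 / 2 : ℝ) * Real.log (‖p‖ ^ 2 + e)) p
      (EuclideanSpace.single α 1) = p α / (‖p‖ ^ 2 + e) := by
    intro p
    rw [(fderiv_reg he p).fderiv]
    simp [EuclideanSpace.inner_single_right]
    ring
  have hne : ∀ p : E2, ‖p‖ ^ 2 + e ≠ 0 := fun p => by positivity
  have hc1 : Continuous fun p : E2 => (1 / 2 : ℝ) * Real.log (‖p‖ ^ 2 + e) :=
    continuous_const.mul (Continuous.log (by fun_prop) hne)
  have hc2 : Continuous fun p : E2 => p α / (‖p‖ ^ 2 + e) :=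
    Continuous.div (by fun_prop) (by fun_prop) hne
  have hc3 : Continuous fun p => fderiv ℝ φ p (EuclideanSpace.single α 1) :=
    (hφ.continuous_fderiv (by simp)).clm_apply continuous_const
  have hs3 : HasCompactSupport fun p => fderiv ℝ φ p (EuclideanSpace.single α 1) :=
    hs.fderiv_apply ℝ _
  have := integral_mul_fderiv_eq_neg_fderiv_mul_of_integrable (μ := (volume : Measure E2))
    (f := fun p : E2 => (1 / 2 : ℝ) * Real.log (‖p‖ ^ 2 + e)) (g := φ)
    (v := EuclideanSpace.single α 1)
    (by simp only [hf]; exact (hc2.mul hφ.continuous).integrable_of_hasCompactSupport hs.mul_left)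
    ((hc1.mul hc3).integrable_of_hasCompactSupport hs3.mul_left)
    ((hc1.mul hφ.continuous).integrable_of_hasCompactSupport hs.mul_left)
    (fun p _ => (fderiv_reg he p).differentiableAt)
    (fun p _ => hφ.differentiable (by simp) p)
  simp only [hf] at this
  exact this

lemma ae_ne_zero : ∀ᵐ p : E2, p ≠ 0 := by
  simp [ae_iff]

lemma reg_bound {r e : ℝ} (hr : 0 < r) (he : 0 < e) (he1 : e ≤ 1) :
    |1 / 2 * Real.log (r ^ 2 + e)| ≤ r ^ 2 + r⁻¹ := by
  have h1 := Real.log_le_sub_one_of_pos (by positivity : 0 < r ^ 2 + e)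
  have h2 := Real.log_le_sub_one_of_pos (inv_pos.2 hr)
  rw [Real.log_inv] at h2
  have h3 : Real.log (r ^ 2) ≤ Real.log (r ^ 2 + e) :=
    Real.log_le_log (by positivity) (by linarith)
  rw [Real.log_pow] at h3
  push_cast at h3
  have := inv_pos.2 hr
  have := sq_nonneg r
  rw [abs_le]; constructor <;> linarith

lemma ibp_zero (φ : E2 → ℝ) (hφ : ContDiff ℝ (⊤ : ℕ∞) φ)
    (hs : HasCompactSupport φ) (α : Fin 2) :
    ∫ p : E2, Real.log ‖p‖ * pd α φ p = -∫ p : E2, (p α / ‖p‖ ^ 2) * φ p := by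
  have hc3 : Continuous (pd α φ) :=
    (hφ.continuous_fderiv (by simp)).clm_apply continuous_const
  have hs3 : HasCompactSupport (pd α φ) := hs.fderiv_apply ℝ _
  let e : ℕ → ℝ := fun n => 1 / ((n : ℝ) + 1)
  have he : ∀ n, 0 < e n := fun n => by positivity
  have he1 : ∀ n, e n ≤ 1 := fun n => by
    simp only [e]; rw [div_le_one (by positivity)]; linarith [n.cast_nonneg (α := ℝ)]
  have het : Tendsto e atTop (𝓝 0) := tendsto_one_div_add_atTop_nhds_zero_nat
  have het' : ∀ r : ℝ, Tendsto (fun n => r ^ 2 + e n) atTop (𝓝 (r ^ 2)) := fun r => by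
    simpa using het.const_add (r ^ 2)
  have t1 : Tendsto (fun n => ∫ p : E2, (1 / 2 * Real.log (‖p‖ ^ 2 + e n)) * pd α φ p) atTop
      (𝓝 (∫ p : E2, Real.log ‖p‖ * pd α φ p)) := by
    refine tendsto_integral_of_dominated_convergence
      (fun p => ‖p‖ ^ 2 * ‖pd α φ p‖ + ‖p‖⁻¹ * ‖pd α φ p‖) ?_ ?_ ?_ ?_
    · intro n
      exact Measurable.aestronglyMeasurable (by have := hc3.measurable; fun_prop)
    · refine Integrable.add ?_ (inv_mul_integrable _ hc3.norm hs3.norm)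
      exact Continuous.integrable_of_hasCompactSupport (by fun_prop) hs3.norm.mul_left
    · intro n
      filter_upwards [ae_ne_zero] with p hp
      rw [norm_mul, ← add_mul]
      gcongr
      exact reg_bound (norm_pos_iff.2 hp) (he n) (he1 n)
    · filter_upwards [ae_ne_zero] with p hp
      refine Tendsto.mul_const _ ?_
      have h0 : ‖p‖ ^ 2 ≠ 0 := by simpa using hp
      have := ((het' ‖p‖).log h0).const_mul (1 / 2)
      rw [Real.log_pow] at this
      convert this using 2
      push_cast; ring
  have t2 : Tendsto (fun n => ∫ p : E2, (p α / (‖p‖ ^ 2 + e n)) * φ p) atTop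
      (𝓝 (∫ p : E2, (p α / ‖p‖ ^ 2) * φ p)) := by
    refine tendsto_integral_of_dominated_convergence
      (fun p => ‖p‖⁻¹ * ‖φ p‖) ?_ ?_ ?_ ?_
    · intro n
      exact Measurable.aestronglyMeasurable (by have := hφ.continuous.measurable; fun_prop)
    · exact inv_mul_integrable _ hφ.continuous.norm hs.norm
    · intro n
      filter_upwards [ae_ne_zero] with p hp
      rw [norm_mul]
      gcongr
      refine le_trans ?_ (ker_le p α)
      have := norm_pos_iff.2 hp
      have := he n
      rw [Real.norm_eq_abs, abs_div, abs_div, abs_of_pos (by positivity : 0 < ‖p‖ ^ 2 + e n),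
        abs_of_pos (by positivity : 0 < ‖p‖ ^ 2)]
      gcongr
      linarith
    · filter_upwards [ae_ne_zero] with p hp
      refine Tendsto.mul_const _ ?_
      have h0 : ‖p‖ ^ 2 ≠ 0 := by simpa using hp
      exact tendsto_const_nhds.div (het' ‖p‖) h0
  refine tendsto_nhds_unique t1 ?_
  simp_rw [reg_ibp (he _) φ hφ hs α]
  exact t2.neg

lemma ibp (φ : E2 → ℝ) (hφ : ContDiff ℝ (⊤ : ℕ∞) φ)
    (hs : HasCompactSupport φ) (α : Fin 2) (a : E2) :
    ∫ p : E2, Real.log ‖p - a‖ * pd α φ p = -∫ p : E2, ((p - a) α / ‖p - a‖ ^ 2) * φ p := by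
  have h := ibp_zero (fun p => φ (p + a)) (hφ.comp (by fun_prop))
    (hs.comp_homeomorph (Homeomorph.addRight a)) α
  have hpd : ∀ p, pd α (fun p => φ (p + a)) p = pd α φ (p + a) := fun p => by
    simp only [pd]; rw [fderiv_comp_add_right]
  simp only [hpd] at h
  rw [← integral_add_right_eq_self (fun p => Real.log ‖p - a‖ * pd α φ p) a,
    ← integral_add_right_eq_self (fun p => ((p - a) α / ‖p - a‖ ^ 2) * φ p) a]
  simpa only [add_sub_cancel_right] using h

end LogPot

/-- **`W^{1,1}` regularity of the logarithmic potential** (proof of Theorem 2.4 of the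
paper).  With `∑ |c i| < ∞` and `x i ∈ B̄(0,R)`, the series
`ℱ(p) = ∑_i (c i / 2π) log |p − x i|` and `G_α(p) = ∑_i (c i / 2π) (p − x i)_α / |p − x i|²`
converge absolutely a.e., are integrable on bounded measurable sets, and `G` is the
distributional gradient of `ℱ`. -/
theorem log_potential_distributional_gradient
    (R : ℝ) (hR : 0 < R) (x : ℕ → EuclideanSpace ℝ (Fin 2))
    (hx : ∀ i, x i ∈ Metric.closedBall (0 : EuclideanSpace ℝ (Fin 2)) R)
    (c : ℕ → ℝ) (hc : Summable fun i => |c i|) :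
    (∀ᵐ p : EuclideanSpace ℝ (Fin 2),
      (Summable fun i => |c i / (2 * π) * Real.log ‖p - x i‖|) ∧
      (∀ α : Fin 2, Summable fun i => |c i / (2 * π) * ((p - x i) α / ‖p - x i‖ ^ 2)|)) ∧
    (∀ A : Set (EuclideanSpace ℝ (Fin 2)), MeasurableSet A → Bornology.IsBounded A →
      IntegrableOn (fun p => ∑' i, c i / (2 * π) * Real.log ‖p - x i‖) A volume ∧
      ∀ α : Fin 2,
        IntegrableOn (fun p => ∑' i, c i / (2 * π) * ((p - x i) α / ‖p - x i‖ ^ 2))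
          A volume) ∧
    (∀ φ : EuclideanSpace ℝ (Fin 2) → ℝ, ContDiff ℝ (⊤ : ℕ∞) φ → HasCompactSupport φ →
      ∀ α : Fin 2,
        ∫ p : EuclideanSpace ℝ (Fin 2),
            (∑' i, c i / (2 * π) * Real.log ‖p - x i‖) * pd α φ p
          = -∫ p : EuclideanSpace ℝ (Fin 2),
              (∑' i, c i / (2 * π) * ((p - x i) α / ‖p - x i‖ ^ 2)) * φ p) := by

  have hx' : ∀ i, ‖x i‖ ≤ R := fun i => by simpa using hx i
  have hd : Summable fun i => |c i / (2 * π)| := by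
    simp_rw [abs_div]; exact hc.div_const _
  have hk1 : Measurable fun p : EuclideanSpace ℝ (Fin 2) => Real.log ‖p‖ := by fun_prop
  have hk2 : ∀ α : Fin 2, Measurable fun p : EuclideanSpace ℝ (Fin 2) => p α / ‖p‖ ^ 2 :=
    fun α => by fun_prop
  refine ⟨?_, ?_, ?_⟩
  · have h1 := LogPot.ae_summable R x hx' _ hd _ hk1 LogPot.log_integrableOn
    have h2 := fun α => LogPot.ae_summable R x hx' _ hd _ (hk2 α) (LogPot.ker_integrableOn α)
    filter_upwards [h1, ae_all_iff.2 h2] with p hp1 hp2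
    exact ⟨hp1, hp2⟩
  · intro A _ hA
    obtain ⟨ρ, hρ⟩ := hA.subset_closedBall 0
    exact ⟨(LogPot.integrableOn_tsum R x hx' _ hd _ hk1 LogPot.log_integrableOn ρ).mono_set hρ,
      fun α => (LogPot.integrableOn_tsum R x hx' _ hd _ (hk2 α)
        (LogPot.ker_integrableOn α) ρ).mono_set hρ⟩
  · intro φ hφ hs α
    have e1 := LogPot.integral_tsum_mul R x hx' _ hd _ hk1 LogPot.log_integrableOn (pd α φ)
      ((hφ.continuous_fderiv (by simp)).clm_apply continuous_const) (hs.fderiv_apply ℝ _)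
    have e2 := LogPot.integral_tsum_mul R x hx' _ hd _ (hk2 α) (LogPot.ker_integrableOn α) φ
      hφ.continuous hs
    rw [e1, e2, ← tsum_neg]
    congr 1; ext i
    rw [LogPot.ibp φ hφ hs α (x i), mul_neg]
end

section
/- Fix a real number Ω and define on ℝ² ∖ {0}, with r² = x² + y², the symmetric matrix field E_xx = (Ω/4π)(log r + y²/r²), E_xy = E_yx = −(Ω/4π) xy/r², E_yy = (Ω/4π)(log r + x²/r²). Then E_xx, E_xy, E_yy are locally integrable on ℝ², and the distributional planar incompatibility of E is Ω times the Dirac mass at the origin: for every φ ∈ C_c^∞(ℝ²), ∫_{ℝ²} ( E_xx ∂_y²φ + E_yy ∂_x²φ − 2 E_xy ∂_x∂_yφ ) dx dy = Ω φ(0,0). -/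
open MeasureTheory Real

/-- `E_xx` component of the wedge-disclination strain with Frank vector `Ω`. -/
noncomputable def Wxx (Ω : ℝ) (p : EuclideanSpace ℝ (Fin 2)) : ℝ :=
  Ω / (4 * π) * (Real.log (Real.sqrt ((p 0) ^ 2 + (p 1) ^ 2))
    + (p 1) ^ 2 / ((p 0) ^ 2 + (p 1) ^ 2))

/-- `E_xy = E_yx` component of the wedge-disclination strain. -/
noncomputable def Wxy (Ω : ℝ) (p : EuclideanSpace ℝ (Fin 2)) : ℝ :=
  -(Ω / (4 * π)) * (p 0 * p 1 / ((p 0) ^ 2 + (p 1) ^ 2))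

/-- `E_yy` component of the wedge-disclination strain. -/
noncomputable def Wyy (Ω : ℝ) (p : EuclideanSpace ℝ (Fin 2)) : ℝ :=
  Ω / (4 * π) * (Real.log (Real.sqrt ((p 0) ^ 2 + (p 1) ^ 2))
    + (p 0) ^ 2 / ((p 0) ^ 2 + (p 1) ^ 2))

open Set Filter Topology

/-- The plane. -/
abbrev PlaneE := EuclideanSpace ℝ (Fin 2)

lemma log_norm_locInt : LocallyIntegrable (fun p : PlaneE => Real.log (Real.sqrt ((p 0) ^ 2 + (p 1) ^ 2))) volume := by
  have h : (fun p : PlaneE => Real.log (Real.sqrt ((p 0) ^ 2 + (p 1) ^ 2))) = fun p => Real.log ‖p‖ := by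
    funext p
    simp [EuclideanSpace.norm_eq, Fin.sum_univ_two]
  rw [h, locallyIntegrable_iff]
  intro K hK
  obtain ⟨R, hR_pos, hR⟩ := hK.isBounded.exists_pos_norm_lt
  refine IntegrableOn.mono_set (t := Metric.ball 0 R) ?_ (fun x hx => mem_ball_zero_iff.mpr (hR x hx))
  rw [integrableOn_fun_norm_addHaar]
  have : (fun y : ℝ => y ^ (Module.finrank ℝ PlaneE - 1) • Real.log y) = fun y => y * Real.log y := by
    funext y; simp
  rw [this]
  exact (Real.continuous_mul_log.continuousOn.integrableOn_Icc (a := 0) (b := R)).mono_set Ioo_subset_Icc_self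

lemma bdd_locInt (f : PlaneE → ℝ) (hm : Measurable f) (hb : ∀ p, |f p| ≤ 1) :
    LocallyIntegrable f volume := by
  refine (locallyIntegrable_const (1:ℝ)).mono hm.aestronglyMeasurable ?_
  filter_upwards with p
  simpa using hb p

lemma frac_bound (a b c : ℝ) (h : |a| ≤ b + c) : |a / (b + c)| ≤ 1 := by
  have h0 : 0 ≤ b + c := (abs_nonneg a).trans h
  rw [abs_div, abs_of_nonneg h0]
  exact div_le_one_of_le₀ h h0

lemma Wxx_locInt (Ω : ℝ) : LocallyIntegrable (Wxx Ω) volume := by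
  have h2 := bdd_locInt (fun p => (p 1) ^ 2 / ((p 0) ^ 2 + (p 1) ^ 2)) (by fun_prop) (fun p =>
    frac_bound _ _ _ (by rw [abs_of_nonneg (sq_nonneg _)]; nlinarith [sq_nonneg (p 0)]))
  exact (log_norm_locInt.add h2).smul (Ω / (4 * π))

lemma Wyy_locInt (Ω : ℝ) : LocallyIntegrable (Wyy Ω) volume := by
  have h2 := bdd_locInt (fun p => (p 0) ^ 2 / ((p 0) ^ 2 + (p 1) ^ 2)) (by fun_prop) (fun p =>
    frac_bound _ _ _ (by rw [abs_of_nonneg (sq_nonneg _)]; nlinarith [sq_nonneg (p 1)]))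
  exact (log_norm_locInt.add h2).smul (Ω / (4 * π))

lemma Wxy_locInt (Ω : ℝ) : LocallyIntegrable (Wxy Ω) volume := by
  have h2 := bdd_locInt (fun p => (p 0) * (p 1) / ((p 0) ^ 2 + (p 1) ^ 2)) (by fun_prop) (fun p =>
    frac_bound _ _ _ (by
      rw [abs_le]; constructor <;> nlinarith [sq_nonneg (p 0 + p 1), sq_nonneg (p 0 - p 1),
        sq_nonneg (p 0), sq_nonneg (p 1)]))
  exact h2.smul (-(Ω / (4 * π)))

/-- First basis vector. -/
noncomputable def bx : PlaneE := EuclideanSpace.single 0 1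
/-- Second basis vector. -/
noncomputable def bY : PlaneE := EuclideanSpace.single 1 1
/-- Radial unit vector. -/
noncomputable def er (θ : ℝ) : PlaneE := cos θ • bx + sin θ • bY
/-- Angular unit vector. -/
noncomputable def et (θ : ℝ) : PlaneE := (-sin θ) • bx + cos θ • bY

@[fun_prop] lemma er_cont : Continuous er := by unfold er; fun_prop
@[fun_prop] lemma et_cont : Continuous et := by unfold et; fun_prop

lemma er_deriv (θ : ℝ) : HasDerivAt er (et θ) θ :=
  ((hasDerivAt_cos θ).smul_const bx).add ((hasDerivAt_sin θ).smul_const bY)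

lemma et_deriv (θ : ℝ) : HasDerivAt et (-er θ) θ := by
  have := ((hasDerivAt_sin θ).neg.smul_const bx).add ((hasDerivAt_cos θ).smul_const bY)
  convert! this using 1
  simp [er, add_comm]

lemma er_norm (θ : ℝ) : ‖er θ‖ = 1 := by
  simp [er, bx, bY, EuclideanSpace.norm_eq, Fin.sum_univ_two]

lemma et_norm (θ : ℝ) : ‖et θ‖ = 1 := by
  simp [et, bx, bY, EuclideanSpace.norm_eq, Fin.sum_univ_two]

lemma polar_integral (f : PlaneE → ℝ) :
    ∫ p, f p = ∫ q in Ioi (0:ℝ) ×ˢ Ioo (-π) π, q.1 * f (q.1 • er q.2) := by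
  have h1 := (EuclideanSpace.volume_preserving_symm_measurableEquiv_toLp (Fin 2)).symm.integral_comp
    (MeasurableEquiv.measurableEmbedding _) f
  have h2 := (volume_preserving_finTwoArrow ℝ).symm.integral_comp
    (MeasurableEquiv.measurableEmbedding _) (fun v : Fin 2 → ℝ => f (WithLp.toLp 2 v))
  rw [← h1]
  refine h2.symm.trans ?_
  rw [← integral_comp_polarCoord_symm]
  refine setIntegral_congr_fun (measurableSet_Ioi.prod measurableSet_Ioo) fun q _ => ?_
  simp only [smul_eq_mul]
  congr 2
  ext i
  fin_cases i <;> simp [er, bx, bY, MeasurableEquiv.finTwoArrow]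

section Main

variable {φ : PlaneE → ℝ}

lemma pd_pd (hφ : ContDiff ℝ (⊤ : ℕ∞) φ) (α β : Fin 2) (p : PlaneE) :
    pd α (pd β φ) p = fderiv ℝ (fderiv ℝ φ) p (EuclideanSpace.single α 1) (EuclideanSpace.single β 1) := by
  have hd : DifferentiableAt ℝ (fderiv ℝ φ) p :=
    ((hφ.fderiv_right (m := 1) (by norm_cast)).differentiable (by norm_num)) p
  unfold pd
  rw [fderiv_clm_apply hd (differentiableAt_const _)]
  simp

/-- Radial part. -/
noncomputable def PA (φ : PlaneE → ℝ) (q : ℝ × ℝ) : ℝ :=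
  q.1 * Real.log q.1 * fderiv ℝ (fderiv ℝ φ) (q.1 • er q.2) (er q.2) (er q.2)
    + Real.log q.1 * fderiv ℝ φ (q.1 • er q.2) (er q.2)
    + q.1 * fderiv ℝ (fderiv ℝ φ) (q.1 • er q.2) (er q.2) (er q.2)

/-- Angular part. -/
noncomputable def PB (φ : PlaneE → ℝ) (q : ℝ × ℝ) : ℝ :=
  q.1 * Real.log q.1 * fderiv ℝ (fderiv ℝ φ) (q.1 • er q.2) (et q.2) (et q.2)
    - Real.log q.1 * fderiv ℝ φ (q.1 • er q.2) (er q.2)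

lemma integrand_polar (hφ : ContDiff ℝ (⊤ : ℕ∞) φ) (Ω : ℝ) (q : ℝ × ℝ) (hq : 0 < q.1) :
    q.1 * (Wxx Ω (q.1 • er q.2) * pd 1 (pd 1 φ) (q.1 • er q.2)
      + Wyy Ω (q.1 • er q.2) * pd 0 (pd 0 φ) (q.1 • er q.2)
            - 2 * Wxy Ω (q.1 • er q.2) * pd 0 (pd 1 φ) (q.1 • er q.2))
      = Ω / (4 * π) * (PA φ q + PB φ q) := by
  obtain ⟨r, θ⟩ := q
  simp only at hq
  have hsym : IsSymmSndFDerivAt ℝ φ (r • er θ) :=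
    hφ.contDiffAt.isSymmSndFDerivAt (by simp only [minSmoothness_of_isRCLikeNormedField]; exact WithTop.coe_le_coe.2 (le_top : (2:ℕ∞) ≤ ⊤))
  have hs := hsym bx bY
  have h0 : (r • er θ) 0 = r * cos θ := by simp [er, bx, bY]
  have h1 : (r • er θ) 1 = r * sin θ := by simp [er, bx, bY]
  have hr : (r * cos θ) ^ 2 + (r * sin θ) ^ 2 = r ^ 2 := by
    linear_combination r ^ 2 * (sin_sq_add_cos_sq θ)
  simp only [pd_pd hφ, Wxx, Wyy, Wxy, PA, PB, h0, h1, hr, Real.sqrt_sq hq.le]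
  change r * (_ * fderiv ℝ (fderiv ℝ φ) (r • er θ) bY bY
    + _ * fderiv ℝ (fderiv ℝ φ) (r • er θ) bx bx - _ * fderiv ℝ (fderiv ℝ φ) (r • er θ) bx bY) = _
  set H := fderiv ℝ (fderiv ℝ φ) (r • er θ)
  have he : H (er θ) (er θ) = cos θ ^ 2 * H bx bx + 2 * (cos θ * sin θ) * H bx bY + sin θ ^ 2 * H bY bY := by
    simp [er, ← hs]; ring
  have ht : H (et θ) (et θ) = sin θ ^ 2 * H bx bx - 2 * (cos θ * sin θ) * H bx bY + cos θ ^ 2 * H bY bY := by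
    simp [et, ← hs]; ring
  rw [he, ht]
  have e1 : (r * cos θ) ^ 2 / r ^ 2 = cos θ ^ 2 := by field_simp
  have e2 : (r * sin θ) ^ 2 / r ^ 2 = sin θ ^ 2 := by field_simp
  have e3 : (r * cos θ) * (r * sin θ) / r ^ 2 = cos θ * sin θ := by field_simp
  rw [e1, e2, e3]
  linear_combination (-(Ω / (4 * π)) * r * Real.log r * (H bx bx + H bY bY)) * (sin_sq_add_cos_sq θ)

/-- The polar measure. -/
noncomputable abbrev μP : Measure (ℝ × ℝ) := (volume.restrict (Ioi (0:ℝ))).prod (volume.restrict (Ioo (-π) π))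

lemma piece_integrable (w : ℝ → ℝ) (hw : ∀ R, IntegrableOn w (Ioc 0 R)) (g : ℝ × ℝ → ℝ)
    (hg : Continuous g) (C R : ℝ) (hC : ∀ q, |g q| ≤ C) (hR : ∀ q, R < q.1 → g q = 0) :
    Integrable (fun q => w q.1 * g q) μP := by
  have h1 : Integrable ((Ioc 0 R).indicator w) (volume.restrict (Ioi (0:ℝ))) :=
    ((integrable_indicator_iff measurableSet_Ioc).2 (hw R)).restrict
  have h2 : Integrable (fun _ : ℝ => (1:ℝ)) (volume.restrict (Ioo (-π) π)) := integrable_const _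
  have h3 := (h1.mul_prod h2).mul_bdd (c := C) hg.aestronglyMeasurable (ae_of_all _ hC)
  refine h3.congr ?_
  have : ∀ᵐ q ∂μP, q ∈ Ioi (0:ℝ) ×ˢ Ioo (-π) π := by
    rw [μP, Measure.prod_restrict]
    exact ae_restrict_mem (measurableSet_Ioi.prod measurableSet_Ioo)
  filter_upwards [this] with q hq
  by_cases h : q.1 ≤ R
  · have : q.1 ∈ Ioc 0 R := ⟨hq.1, h⟩
    simp [this]
  · simp [hR q (not_le.1 h)]

lemma cs_bound {F : Type*} [NormedAddCommGroup F] (f : PlaneE → F) (hf : Continuous f)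
    (hs : HasCompactSupport f) : ∃ C R : ℝ, 0 ≤ C ∧ (∀ p, ‖f p‖ ≤ C) ∧ ∀ p, R < ‖p‖ → f p = 0 := by
  obtain ⟨C, hC⟩ := hf.bounded_above_of_compact_support hs
  obtain ⟨R, hR_pos, hR⟩ := hs.isBounded.exists_pos_norm_lt
  refine ⟨C, R, (norm_nonneg _).trans (hC 0), hC, fun p hp => ?_⟩
  by_contra h
  exact absurd (hR p (subset_tsupport f h)) (by linarith)

lemma r_le_norm (r θ : ℝ) : r ≤ ‖r • er θ‖ := by
  rw [norm_smul, er_norm, mul_one]; exact le_abs_self r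

lemma cont1 (hφ : ContDiff ℝ (⊤ : ℕ∞) φ) : Continuous (fderiv ℝ φ) :=
  hφ.continuous_fderiv (by simp)

lemma cont2 (hφ : ContDiff ℝ (⊤ : ℕ∞) φ) : Continuous (fderiv ℝ (fderiv ℝ φ)) :=
  (hφ.fderiv_right (m := 1) (by norm_cast)).continuous_fderiv (by simp)

lemma piece1 (hφ : ContDiff ℝ (⊤ : ℕ∞) φ) (hs : HasCompactSupport φ)
    (w : ℝ → ℝ) (hw : ∀ R, IntegrableOn w (Ioc 0 R)) (u : ℝ → PlaneE) (hu : Continuous u)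
    (hu1 : ∀ θ, ‖u θ‖ = 1) :
    Integrable (fun q : ℝ × ℝ => w q.1 * fderiv ℝ φ (q.1 • er q.2) (u q.2)) μP := by
  obtain ⟨C, R, hC0, hC, hR⟩ := cs_bound _ (cont1 hφ) (hs.fderiv (𝕜 := ℝ))
  have := cont1 hφ
  refine piece_integrable w hw (fun q => fderiv ℝ φ (q.1 • er q.2) (u q.2)) ?_ C R ?_ ?_
  · fun_prop
  · intro q
    have := (fderiv ℝ φ (q.1 • er q.2)).le_opNorm (u q.2)
    rw [hu1, mul_one] at this
    exact this.trans (hC _)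
  · intro q hq
    simp [hR _ (hq.trans_le (r_le_norm q.1 q.2))]

lemma piece2_aux (H : PlaneE → PlaneE →L[ℝ] PlaneE →L[ℝ] ℝ) (hH : Continuous H)
    (C R : ℝ) (hC : ∀ p, ‖H p‖ ≤ C) (hR : ∀ p, R < ‖p‖ → H p = 0)
    (w : ℝ → ℝ) (hw : ∀ R, IntegrableOn w (Ioc 0 R)) (u : ℝ → PlaneE) (hu : Continuous u)
    (hu1 : ∀ θ, ‖u θ‖ = 1) :
    Integrable (fun q : ℝ × ℝ => w q.1 * H (q.1 • er q.2) (u q.2) (u q.2)) μP := by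
  refine piece_integrable w hw (fun q => H (q.1 • er q.2) (u q.2) (u q.2)) ?_ C R ?_ ?_
  · fun_prop
  · intro q
    have := (H (q.1 • er q.2)).le_opNorm₂ (u q.2) (u q.2)
    rw [hu1, mul_one, mul_one] at this
    exact this.trans (hC _)
  · intro q hq
    simp [hR _ (hq.trans_le (r_le_norm q.1 q.2))]

lemma cs_bound_fderiv {F : Type*} [NormedAddCommGroup F] [NormedSpace ℝ F] (f : PlaneE → F)
    (hf : Continuous (fderiv ℝ f)) (hs : HasCompactSupport f) :
    ∃ C R : ℝ, 0 ≤ C ∧ (∀ p, ‖fderiv ℝ f p‖ ≤ C) ∧ ∀ p, R < ‖p‖ → fderiv ℝ f p = 0 :=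
  cs_bound (fderiv ℝ f) hf (hs.fderiv (𝕜 := ℝ))

lemma piece2 (hφ : ContDiff ℝ (⊤ : ℕ∞) φ) (hs : HasCompactSupport φ)
    (w : ℝ → ℝ) (hw : ∀ R, IntegrableOn w (Ioc 0 R)) (u : ℝ → PlaneE) (hu : Continuous u)
    (hu1 : ∀ θ, ‖u θ‖ = 1) :
    Integrable (fun q : ℝ × ℝ => w q.1 * fderiv ℝ (fderiv ℝ φ) (q.1 • er q.2) (u q.2) (u q.2)) μP := by
  obtain ⟨C, R, -, hC, hR⟩ := cs_bound_fderiv (fderiv ℝ φ) (cont2 hφ) (hs.fderiv (𝕜 := ℝ))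
  exact piece2_aux _ (cont2 hφ) C R hC hR w hw u hu hu1

lemma w_log (R : ℝ) : IntegrableOn Real.log (Ioc 0 R) :=
  (intervalIntegral.intervalIntegrable_log' (a := 0) (b := R)).1

lemma w_cont (w : ℝ → ℝ) (hw : Continuous w) (R : ℝ) : IntegrableOn w (Ioc 0 R) :=
  (hw.intervalIntegrable 0 R).1

lemma PA_int (hφ : ContDiff ℝ (⊤ : ℕ∞) φ) (hs : HasCompactSupport φ) : Integrable (PA φ) μP :=
  ((piece2 hφ hs (fun r => r * Real.log r) (w_cont _ Real.continuous_mul_log) er er_cont er_norm).add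
    (piece1 hφ hs Real.log w_log er er_cont er_norm)).add
    (piece2 hφ hs (fun r => r) (w_cont _ continuous_id) er er_cont er_norm)

lemma PB_int (hφ : ContDiff ℝ (⊤ : ℕ∞) φ) (hs : HasCompactSupport φ) : Integrable (PB φ) μP :=
  (piece2 hφ hs (fun r => r * Real.log r) (w_cont _ Real.continuous_mul_log) et et_cont et_norm).sub
    (piece1 hφ hs Real.log w_log er er_cont er_norm)

lemma hasF1 (hφ : ContDiff ℝ (⊤ : ℕ∞) φ) (p : PlaneE) : HasFDerivAt φ (fderiv ℝ φ p) p :=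
  (hφ.differentiable (by simp) p).hasFDerivAt

lemma hasF2 (hφ : ContDiff ℝ (⊤ : ℕ∞) φ) (p : PlaneE) :
    HasFDerivAt (fderiv ℝ φ) (fderiv ℝ (fderiv ℝ φ) p) p :=
  (((hφ.fderiv_right (m := 1) (by norm_cast)).differentiable (by norm_num)) p).hasFDerivAt

lemma PA_radial (hφ : ContDiff ℝ (⊤ : ℕ∞) φ) (hs : HasCompactSupport φ) (θ : ℝ)
    (hi : Integrable (fun r => PA φ (r, θ)) (volume.restrict (Ioi (0:ℝ)))) :
    ∫ r in Ioi (0:ℝ), PA φ (r, θ) = 2 * φ 0 := by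
  have c0 := hφ.continuous
  have c1 := cont1 hφ
  have hc := Real.continuous_mul_log
  let f : ℝ → ℝ := fun r => (r * Real.log r) * fderiv ℝ φ (r • er θ) (er θ)
    + r * fderiv ℝ φ (r • er θ) (er θ) - 2 * φ (r • er θ)
  have hfc : Continuous f := by
    refine ((hc.mul ?_).add ?_).sub ?_ <;> fun_prop
  have hd : ∀ r ∈ Ioi (0:ℝ), HasDerivAt f (PA φ (r, θ)) r := by
    intro r hr
    have hr0 : r ≠ 0 := ne_of_gt hr
    have hl : HasDerivAt (fun r : ℝ => r • er θ) (er θ) r := by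
      simpa using (hasDerivAt_id r).smul_const (er θ)
    have d0 : HasDerivAt (fun r : ℝ => φ (r • er θ)) (fderiv ℝ φ (r • er θ) (er θ)) r :=
      (hasF1 hφ _).comp_hasDerivAt r hl
    have d1' : HasDerivAt (fun r : ℝ => fderiv ℝ φ (r • er θ))
        (fderiv ℝ (fderiv ℝ φ) (r • er θ) (er θ)) r :=
      (hasF2 hφ _).comp_hasDerivAt r hl
    have d1 : HasDerivAt (fun r : ℝ => fderiv ℝ φ (r • er θ) (er θ))
        (fderiv ℝ (fderiv ℝ φ) (r • er θ) (er θ) (er θ)) r := by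
      simpa using d1'.clm_apply (hasDerivAt_const r (er θ))
    have dl := Real.hasDerivAt_mul_log hr0
    have := ((dl.mul d1).add ((hasDerivAt_id r).mul d1)).sub (d0.const_mul 2)
    refine this.congr_deriv ?_
    simp only [PA, id]
    ring
  have ht : Tendsto f atTop (𝓝 0) := by
    obtain ⟨C, R, hC0, hC, hR⟩ := cs_bound _ c1 (hs.fderiv (𝕜 := ℝ))
    obtain ⟨C', R', hC0', hC', hR'⟩ := cs_bound _ c0 hs
    refine tendsto_const_nhds.congr' ?_
    filter_upwards [eventually_gt_atTop R, eventually_gt_atTop R'] with r h1 h2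
    simp [f, hR _ (h1.trans_le (r_le_norm r θ)), hR' _ (h2.trans_le (r_le_norm r θ))]
  rw [integral_Ioi_of_hasDerivAt_of_tendsto hfc.continuousWithinAt hd hi ht]
  simp [f]

lemma PB_angular (hφ : ContDiff ℝ (⊤ : ℕ∞) φ) (r : ℝ) :
    ∫ θ in Ioo (-π) π, PB φ (r, θ) = 0 := by
  have c1 := cont1 hφ
  have c2 := cont2 hφ
  rw [← integral_Ioc_eq_integral_Ioo, ← intervalIntegral.integral_of_le (by linarith [pi_pos])]
  have hd : ∀ θ ∈ uIcc (-π) π, HasDerivAt (fun θ => Real.log r * fderiv ℝ φ (r • er θ) (et θ))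
      (PB φ (r, θ)) θ := by
    intro θ _
    have hl : HasDerivAt (fun θ : ℝ => r • er θ) (r • et θ) θ := (er_deriv θ).const_smul r
    have d1' : HasDerivAt (fun θ : ℝ => fderiv ℝ φ (r • er θ))
        (fderiv ℝ (fderiv ℝ φ) (r • er θ) (r • et θ)) θ :=
      (hasF2 hφ _).comp_hasDerivAt θ hl
    have := (d1'.clm_apply (et_deriv θ)).const_mul (Real.log r)
    refine this.congr_deriv ?_
    simp [PB]
    ring
  rw [intervalIntegral.integral_eq_sub_of_hasDerivAt hd]
  · simp [er, et]
  · refine Continuous.intervalIntegrable ?_ _ _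
    simp only [PB]
    fun_prop

end Main



/-- **Incompatibility of a wedge disclination** (equation (2.46) of the paper).
The strain components are locally integrable and the distributional planar
incompatibility `∂_y²E_xx + ∂_x²E_yy − 2∂_x∂_yE_xy` equals `Ω δ₀`. -/
theorem wedge_disclination_incompatibility (Ω : ℝ) :
    LocallyIntegrable (Wxx Ω) volume ∧
    LocallyIntegrable (Wxy Ω) volume ∧
    LocallyIntegrable (Wyy Ω) volume ∧
    ∀ φ : EuclideanSpace ℝ (Fin 2) → ℝ, ContDiff ℝ (⊤ : ℕ∞) φ → HasCompactSupport φ →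
      ∫ p : EuclideanSpace ℝ (Fin 2),
          (Wxx Ω p * pd 1 (pd 1 φ) p + Wyy Ω p * pd 0 (pd 0 φ) p
            - 2 * Wxy Ω p * pd 0 (pd 1 φ) p)
        = Ω * φ 0 := by

  refine ⟨Wxx_locInt Ω, Wxy_locInt Ω, Wyy_locInt Ω, fun φ hφ hs => ?_⟩
  rw [polar_integral, setIntegral_congr_fun (measurableSet_Ioi.prod measurableSet_Ioo)
    (fun q hq => integrand_polar hφ Ω q hq.1), integral_const_mul,
    Measure.volume_eq_prod, ← Measure.prod_restrict, integral_add (PA_int hφ hs) (PB_int hφ hs),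
    integral_prod_symm _ (PA_int hφ hs), integral_prod _ (PB_int hφ hs)]
  simp only [PB_angular hφ, integral_zero, add_zero]
  have hA : ∫ θ in Ioo (-π) π, ∫ r in Ioi (0:ℝ), PA φ (r, θ)
      = ∫ θ in Ioo (-π) π, 2 * φ 0 := by
    refine integral_congr_ae ?_
    filter_upwards [(PA_int hφ hs).prod_left_ae] with θ hθ
    exact PA_radial hφ hs θ hθ
  rw [hA]
  have : (volume.real (Ioo (-π) π)) = 2 * π := by
    rw [Real.volume_real_Ioo_of_le (by linarith [pi_pos])]; ring
  simp only [integral_const, measureReal_restrict_apply_univ, this, smul_eq_mul]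
  field_simp
  ring
end
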